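/- Define h_i^{(p)} by: h_1^{(1)} = 1/q_1; h_i^{(1)} = F̃_i·h_{i−1}^{(1)} + 1/q_i for i = 2,…,N; h_1^{(p)} = 0 for p ≥ 2; and h_i^{(p)} = F̃_i·(h_{i−1}^{(p)} + p·h_{i−1}^{(1)}·h_{i−1}^{(p−1)}) + Σ_{k=1}^{p−2} C(p,k)·h_{i−1}^{(k)}·h_i^{(p−k)} for i = 2,…,N and p ≥ 2. Define g̃_i^{(r)} by: g̃_1^{(r)} = 0 for all r ≥ 1; g̃_i^{(1)} = F̃_i·W_{i−1,i−1} for i = 2,…,N, where W = (BB^⊤)^{−1}; and g̃_i^{(r)} = F̃_i·g̃_{i−1}^{(r)} + B̌_{i−1}·g̃_i^{(r−1)} + Σ_{k=1}^{r−1} g̃_{i−1}^{(k)}·g̃_i^{(r−k)} for i = 2,…,N and r ≥ 2. Then for every i = 1,…,N and every integer M ≥ 2, h_i^{(M)} = M!·g̃_i^{(M)}. -/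

import Mathlib

open Matrix

/-!
Put `ĝ_i^{(r)} = g̃_i^{(r)} + [r = 1] / q_i`. The recursion for `g̃` says that the ordinary
generating functions in `r ≥ 1` satisfy `G̃_i = F̃_i Ĝ_{i-1} + Ĝ_{i-1} G̃_i`. The recursion for `h`
says the same about exponential generating functions, with `H_{i-1}` in place of `Ĝ_{i-1}` and
`H_i - x / q_i` in place of `G̃_i`. Hence `H_i = Ĝ_i` by induction on `i`. The coefficient of `x` in
the first equation is where the matrix enters: it requires `ĝ_i^{(1)} = W_{i,i}`, which follows from
`W_{i,i} = F̃_i W_{i-1,i-1} + 1 / q_i`.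
-/

section Transform

section CommSemiring

variable {R : Type*} [CommSemiring R] {F β : R} {a a' b b' : ℕ → R}

/-- `b` is the solution of `B = F A + A B`, where `A = ∑_{r ≥ 1} a_r x ^ r` and
`B = ∑_{r ≥ 1} b_r x ^ r` are ordinary generating functions.
The entries `a 0` and `b 0` are ignored. -/
def IsOrdinaryTransform (F : R) (a b : ℕ → R) : Prop :=
  ∀ r, 1 ≤ r → b r = F * a r + ∑ k ∈ Finset.Icc 1 (r - 1), a k * b (r - k)

/-- `b` is the solution of `B = F A + A B`, where `A = ∑_{r ≥ 1} a_r x ^ r / r!` and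
`B = ∑_{r ≥ 1} b_r x ^ r / r!` are exponential generating functions, with denominators cleared.
The entries `a 0` and `b 0` are ignored. -/
def IsExponentialTransform (F : R) (a b : ℕ → R) : Prop :=
  ∀ r, 1 ≤ r → b r = F * a r + ∑ k ∈ Finset.Icc 1 (r - 1), (r.choose k : R) * a k * b (r - k)

theorem IsExponentialTransform.eq_factorial_mul (hb : IsExponentialTransform F a b)
    (hb' : IsOrdinaryTransform F a' b') (ha : ∀ r, 1 ≤ r → a r = (r.factorial : R) * a' r) :
    ∀ r, 1 ≤ r → b r = (r.factorial : R) * b' r := by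
  intro r
  induction r using Nat.strong_induction_on with
  | _ r ih =>
    intro hr
    have summand_eq : ∀ k ∈ Finset.Icc 1 (r - 1),
        (r.choose k : R) * a k * b (r - k) = (r.factorial : R) * (a' k * b' (r - k)) := by
      intro k hk
      rw [Finset.mem_Icc] at hk
      rw [ha k hk.1, ih (r - k) (by lia) (by lia),
        ← Nat.choose_mul_factorial_mul_factorial (show k ≤ r by lia)]
      push_cast
      ring
    rw [hb r hr, hb' r hr, ha r hr, Finset.sum_congr rfl summand_eq, ← Finset.mul_sum]
    ring

theorem isOrdinaryTransform_add_single (h_one : b 1 = F * (a 1 + β))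
    (h_rec : ∀ r, 2 ≤ r → b r = F * a r + β * b (r - 1)
      + ∑ k ∈ Finset.Icc 1 (r - 1), a k * b (r - k)) :
    IsOrdinaryTransform F (a + Pi.single 1 β) b := by
  intro r hr
  obtain rfl | hr := hr.eq_or_lt
  · simpa using h_one
  have sum_single : ∑ k ∈ Finset.Icc 1 (r - 1), (Pi.single 1 β : ℕ → R) k * b (r - k)
      = β * b (r - 1) := by
    rw [Finset.sum_eq_single_of_mem 1 (Finset.mem_Icc.2 ⟨le_rfl, by lia⟩)
      fun k _ hk ↦ by rw [Pi.single_eq_of_ne hk, zero_mul], Pi.single_eq_same]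
  simp only [Pi.add_apply, add_mul, Finset.sum_add_distrib, sum_single, h_rec r hr,
    Pi.single_eq_of_ne hr.ne', add_zero]
  ring

end CommSemiring

section CommRing

variable {R : Type*} [CommRing R]

theorem isExponentialTransform_sub_single {F β : R} {a b : ℕ → R} (h_one : b 1 = F * a 1 + β)
    (h_rec : ∀ r, 2 ≤ r → b r = F * (a r + r * a 1 * a (r - 1))
      + ∑ k ∈ Finset.Icc 1 (r - 2), (r.choose k : R) * a k * b (r - k)) :
    IsExponentialTransform F a (b - Pi.single 1 β) := by
  intro r hr
  obtain rfl | hr := hr.eq_or_lt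
  · simp [h_one]
  obtain ⟨m, rfl⟩ := Nat.exists_eq_add_of_le' hr
  set b₀ := b - (Pi.single 1 β : ℕ → R) with b₀_def
  have sum_below_top : ∑ k ∈ Finset.Icc 1 m, ((m + 2).choose k : R) * a k * b₀ (m + 2 - k)
      = ∑ k ∈ Finset.Icc 1 m, ((m + 2).choose k : R) * a k * b (m + 2 - k) := by
    refine Finset.sum_congr rfl fun k hk ↦ ?_
    have hk := (Finset.mem_Icc.1 hk).2
    rw [b₀_def, Pi.sub_apply, Pi.single_eq_of_ne (by lia), sub_zero]
  -- The summand `k = m + 1` supplies the separate term `F * ((m + 2) * a 1 * a (m + 1))`.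
  have choose_top : (m + 2).choose (m + 1) = m + 2 := Nat.choose_succ_self_right (m + 1)
  have top_apply : b₀ (m + 2 - (m + 1)) = F * a 1 := by
    simp [b₀_def, h_one, show m + 2 - (m + 1) = 1 by lia]
  rw [show m + 2 - 1 = m + 1 from rfl, Finset.sum_Icc_succ_top (by lia), sum_below_top, top_apply,
    choose_top, b₀_def, Pi.sub_apply, Pi.single_eq_of_ne (by lia), h_rec (m + 2) hr]
  simp only [Nat.add_sub_cancel, show m + 2 - 1 = m + 1 from rfl]
  ring

theorem eq_factorial_mul_add_single {N : ℕ} {F β : ℕ → R} {h g : ℕ → ℕ → R}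
    (h_zero : ∀ r, 1 ≤ r → h r 0 = (r.factorial : R) * (g r 0 + (Pi.single 1 (β 0) : ℕ → R) r))
    (hg : ∀ i, i + 1 < N →
      IsOrdinaryTransform (F i) ((g · i) + Pi.single 1 (β i)) (g · (i + 1)))
    (hh : ∀ i, i + 1 < N →
      IsExponentialTransform (F i) (h · i) ((h · (i + 1)) - Pi.single 1 (β (i + 1)))) :
    ∀ i, i < N → ∀ r, 1 ≤ r →
      h r i = (r.factorial : R) * (g r i + (Pi.single 1 (β i) : ℕ → R) r) := by
  intro i
  induction i with
  | zero => exact fun _ ↦ h_zero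
  | succ i ih =>
    intro hi r hr
    have transform_eq := (hh i hi).eq_factorial_mul (hg i hi) (ih (by lia)) r hr
    obtain rfl | hr := hr.eq_or_lt
    · simpa [sub_eq_iff_eq_add] using transform_eq
    · simpa [Pi.single_eq_of_ne hr.ne'] using transform_eq

end CommRing

end Transform

section Triangular

variable {n R : Type*} [Fintype n] [CommRing R]

theorem inv_mul_transpose_self_mul [DecidableEq n] {A : Matrix n n R} (hA : IsUnit A) :
    (A * Aᵀ)⁻¹ * A = A⁻¹ᵀ := by
  rw [Matrix.mul_inv_rev, nonsing_inv_mul_cancel_right _ _ ((isUnit_iff_isUnit_det A).1 hA),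
    transpose_nonsing_inv]

variable [LinearOrder n]

theorem mul_apply_self_of_isUpperTriangular {S : Type*} [NonUnitalNonAssocSemiring S]
    {A B : Matrix n n S} (hA : A.IsUpperTriangular) (hB : B.IsUpperTriangular) (i : n) :
    (A * B) i i = A i i * B i i := by
  rw [mul_apply]
  refine Fintype.sum_eq_single i fun j hj ↦ ?_
  obtain hji | hij := hj.lt_or_gt
  · rw [hA hji, zero_mul]
  · rw [hB hij, mul_zero]

theorem isUpperTriangular_inv {A : Matrix n n R} (hA : IsUnit A) (hA' : A.IsUpperTriangular) :
    A⁻¹.IsUpperTriangular :=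
  have := hA.invertible
  blockTriangular_inv_of_blockTriangular hA'

theorem inv_apply_self_of_isUpperTriangular {K : Type*} [Field K] {A : Matrix n n K}
    (hA : IsUnit A) (hA' : A.IsUpperTriangular) (i : n) : A⁻¹ i i = (A i i)⁻¹ := by
  refine eq_inv_of_mul_eq_one_left ?_
  rw [← mul_apply_self_of_isUpperTriangular (isUpperTriangular_inv hA hA') hA',
    nonsing_inv_mul A ((isUnit_iff_isUnit_det A).1 hA), one_apply_eq]

end Triangular

section UpperBidiagonal

/-- The `N × N` upper bidiagonal matrix with diagonal `d 0, …, d (N - 1)` and superdiagonal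
`s 0, …, s (N - 2)`. The entries come from sequences on `ℕ`, whose later terms are ignored. -/
def upperBidiagonal {R : Type*} [Zero R] (N : ℕ) (d s : ℕ → R) : Matrix (Fin N) (Fin N) R :=
  .of fun i j ↦ if (j : ℕ) = i then d i else if (j : ℕ) = i + 1 then s i else 0

theorem upperBidiagonal_apply_self {R : Type*} [Zero R] {N : ℕ} (d s : ℕ → R) (i : Fin N) :
    upperBidiagonal N d s i i = d i :=
  if_pos rfl

theorem isUpperTriangular_upperBidiagonal {R : Type*} [Zero R] (N : ℕ) (d s : ℕ → R) :
    (upperBidiagonal N d s).IsUpperTriangular := by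
  intro i j (hji : (j : ℕ) < i)
  rw [upperBidiagonal, of_apply, if_neg (by lia), if_neg (by lia)]

section Semiring

variable {R m : Type*} [NonUnitalNonAssocSemiring R] {N : ℕ} (A : Matrix m (Fin N) R)
  (d s : ℕ → R) (k : m)

theorem mul_upperBidiagonal_apply_zero (h0 : 0 < N) :
    (A * upperBidiagonal N d s) k ⟨0, h0⟩ = A k ⟨0, h0⟩ * d 0 := by
  rw [mul_apply, Fintype.sum_eq_single ⟨0, h0⟩]
  · simp [upperBidiagonal]
  · intro j hj
    simp [upperBidiagonal, Ne.symm (Fin.val_ne_of_ne hj)]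

theorem mul_upperBidiagonal_apply_succ {i : ℕ} (hi : i + 1 < N) :
    (A * upperBidiagonal N d s) k ⟨i + 1, hi⟩
      = A k ⟨i, by lia⟩ * s i + A k ⟨i + 1, hi⟩ * d (i + 1) := by
  rw [mul_apply, Fintype.sum_eq_add ⟨i, Nat.lt_of_succ_lt hi⟩ ⟨i + 1, hi⟩ (by simp)]
  · simp [upperBidiagonal]
  · rintro j ⟨hj, hj'⟩
    have := Fin.val_ne_of_ne hj
    have := Fin.val_ne_of_ne hj'
    simp [upperBidiagonal, show i + 1 ≠ j by lia, show i ≠ j by lia]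

end Semiring

variable {K : Type*} [Field K] {N : ℕ} {d s : ℕ → K}

theorem isUnit_upperBidiagonal (hd : ∀ i, i < N → d i ≠ 0) : IsUnit (upperBidiagonal N d s) := by
  rw [isUnit_iff_isUnit_det, det_of_isUpperTriangular (isUpperTriangular_upperBidiagonal N d s),
    isUnit_iff_ne_zero, Finset.prod_ne_zero_iff]
  intro i _
  rw [upperBidiagonal_apply_self]
  exact hd i i.2

theorem inv_upperBidiagonal_apply_of_lt (hd : ∀ i, i < N → d i ≠ 0) {i j : Fin N} (hij : j < i) :
    (upperBidiagonal N d s)⁻¹ i j = 0 :=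
  isUpperTriangular_inv (isUnit_upperBidiagonal hd) (isUpperTriangular_upperBidiagonal N d s) hij

theorem inv_upperBidiagonal_apply_self (hd : ∀ i, i < N → d i ≠ 0) (i : Fin N) :
    (upperBidiagonal N d s)⁻¹ i i = (d i)⁻¹ := by
  rw [inv_apply_self_of_isUpperTriangular (isUnit_upperBidiagonal hd)
    (isUpperTriangular_upperBidiagonal N d s), upperBidiagonal_apply_self]

theorem inv_upperBidiagonal_mul_transpose_apply_zero (hd : ∀ i, i < N → d i ≠ 0) (h0 : 0 < N) :
    (upperBidiagonal N d s * (upperBidiagonal N d s)ᵀ)⁻¹ ⟨0, h0⟩ ⟨0, h0⟩ = 1 / d 0 ^ 2 := by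
  have mul_apply_zero := congr_fun₂
    (inv_mul_transpose_self_mul (isUnit_upperBidiagonal (s := s) hd)) ⟨0, h0⟩ ⟨0, h0⟩
  rw [mul_upperBidiagonal_apply_zero, transpose_apply,
    inv_upperBidiagonal_apply_self hd] at mul_apply_zero
  have := hd 0 h0
  field_simp at mul_apply_zero ⊢
  exact mul_apply_zero

theorem inv_upperBidiagonal_mul_transpose_apply_succ (hd : ∀ i, i < N → d i ≠ 0) {i : ℕ}
    (hi : i + 1 < N) :
    (upperBidiagonal N d s * (upperBidiagonal N d s)ᵀ)⁻¹ ⟨i + 1, hi⟩ ⟨i + 1, hi⟩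
      = s i ^ 2 / d (i + 1) ^ 2
          * (upperBidiagonal N d s * (upperBidiagonal N d s)ᵀ)⁻¹ ⟨i, by lia⟩ ⟨i, by lia⟩
        + 1 / d (i + 1) ^ 2 := by
  have mul_eq := inv_mul_transpose_self_mul (isUnit_upperBidiagonal (s := s) hd)
  have W_symm : (upperBidiagonal N d s * (upperBidiagonal N d s)ᵀ)⁻¹.IsSymm :=
    (isSymm_mul_transpose_self _).inv
  set W := (upperBidiagonal N d s * (upperBidiagonal N d s)ᵀ)⁻¹
  -- `W * B = (B⁻¹)ᵀ` is lower triangular with diagonal entries `(d i)⁻¹`.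
  have above_diag :
      W ⟨i, by lia⟩ ⟨i, by lia⟩ * s i + W ⟨i, by lia⟩ ⟨i + 1, hi⟩ * d (i + 1) = 0 := by
    rw [← mul_upperBidiagonal_apply_succ, mul_eq, transpose_apply,
      inv_upperBidiagonal_apply_of_lt hd (Nat.lt_succ_self i)]
  have on_diag : W ⟨i, by lia⟩ ⟨i + 1, hi⟩ * s i + W ⟨i + 1, hi⟩ ⟨i + 1, hi⟩ * d (i + 1)
      = (d (i + 1))⁻¹ := by
    rw [W_symm.apply, ← mul_upperBidiagonal_apply_succ, mul_eq, transpose_apply,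
      inv_upperBidiagonal_apply_self hd]
  have := hd (i + 1) hi
  field_simp at on_diag ⊢
  linear_combination on_diag - s i * above_diag

end UpperBidiagonal

theorem stmt_7_general {K : Type*} [Field K] (N : ℕ) (q e d s : ℕ → K)
    (hq : ∀ i, i < N → q i ≠ 0)
    (hd : ∀ i, i < N → d i ^ 2 = q i) (hs : ∀ i, i + 1 < N → s i ^ 2 = e i)
    (W : Matrix (Fin N) (Fin N) K)
    (hW : W = (upperBidiagonal N d s * (upperBidiagonal N d s)ᵀ)⁻¹)
    (h : ℕ → ℕ → K)
    (hh1a : h 1 0 = 1 / q 0)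
    (hh1b : ∀ i, 0 < i → i < N → h 1 i = e (i - 1) / q i * h 1 (i - 1) + 1 / q i)
    (hhp0 : ∀ p, 2 ≤ p → h p 0 = 0)
    (hhp : ∀ p, 2 ≤ p → ∀ i, 0 < i → i < N →
      h p i = e (i - 1) / q i * (h p (i - 1) + p * h 1 (i - 1) * h (p - 1) (i - 1))
        + ∑ k ∈ Finset.Icc 1 (p - 2), (p.choose k : K) * h k (i - 1) * h (p - k) i)
    (gt : ℕ → ℕ → K)
    (hgt0 : ∀ r, 1 ≤ r → gt r 0 = 0)
    (hgt1 : ∀ i (h1 : 0 < i) (h2 : i < N),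
      gt 1 i = e (i - 1) / q i * W ⟨i - 1, by lia⟩ ⟨i - 1, by lia⟩)
    (hgtr : ∀ r, 2 ≤ r → ∀ i, 0 < i → i < N →
      gt r i = e (i - 1) / q i * gt r (i - 1) + 1 / q (i - 1) * gt (r - 1) i
        + ∑ k ∈ Finset.Icc 1 (r - 1), gt k (i - 1) * gt (r - k) i) :
    ∀ i, i < N → ∀ M, 2 ≤ M → h M i = (Nat.factorial M : K) * gt M i := by
  have hd0 : ∀ i, i < N → d i ≠ 0 := fun i hi ↦ pow_ne_zero_iff two_ne_zero |>.1 (hd i hi ▸ hq i hi)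
  have W_diag : ∀ i (hi : i < N), W ⟨i, hi⟩ ⟨i, hi⟩ = gt 1 i + 1 / q i := by
    rintro (_ | i) hi
    · rw [hW, inv_upperBidiagonal_mul_transpose_apply_zero hd0, hd 0 hi, hgt0 1 le_rfl, zero_add]
    · rw [hgt1 (i + 1) i.succ_pos hi, hW, inv_upperBidiagonal_mul_transpose_apply_succ hd0,
        hd (i + 1) hi, hs i hi]
      rfl
  have h_zero : ∀ r, 1 ≤ r →
      h r 0 = (r.factorial : K) * (gt r 0 + (Pi.single 1 (1 / q 0) : ℕ → K) r) := by
    intro r hr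
    obtain rfl | hr' := hr.eq_or_lt
    · simp [hh1a, hgt0]
    · simp [hhp0 r hr', hgt0 r hr, hr'.ne']
  have gt_transform : ∀ i, i + 1 < N → IsOrdinaryTransform (e i / q (i + 1))
      ((gt · i) + Pi.single 1 (1 / q i)) (gt · (i + 1)) := fun i hi ↦
    isOrdinaryTransform_add_single (by rw [hgt1 (i + 1) i.succ_pos hi, ← W_diag i]; rfl)
      fun r hr ↦ hgtr r hr (i + 1) i.succ_pos hi
  have h_transform : ∀ i, i + 1 < N → IsExponentialTransform (e i / q (i + 1))
      (h · i) ((h · (i + 1)) - Pi.single 1 (1 / q (i + 1))) := fun i hi ↦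
    isExponentialTransform_sub_single (hh1b (i + 1) i.succ_pos hi)
      fun p hp ↦ hhp p hp (i + 1) i.succ_pos hi
  intro i hi M hM
  rw [eq_factorial_mul_add_single (F := fun i ↦ e i / q (i + 1)) (β := fun i ↦ 1 / q i)
    h_zero gt_transform h_transform i hi M (by lia), Pi.single_eq_of_ne (by lia), add_zero]

/-- the relationship `h_i^{(M)} = M! · g̃_i^{(M)}` for `M ≥ 2`.
Indices are 0-based: the paper's 1-based `h_i^{(p)}` is `h p (i-1)`,
`g̃_i^{(r)}` is `gt r (i-1)`; `B̌_i = 1/q_i` is `1 / q (i-1)`;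
`F̃_i = e_{i-1}/q_i` is `e (i-2) / q (i-1)`; `W = (BBᵀ)⁻¹`. -/
theorem stmt_7 (N : ℕ) (hN : 0 < N) (q e : ℕ → ℝ)
    (hq : ∀ i, i < N → 0 < q i) (he : ∀ i, i + 1 < N → 0 < e i)
    (B : Matrix (Fin N) (Fin N) ℝ)
    (hB : ∀ i j : Fin N, B i j =
      if (j : ℕ) = (i : ℕ) then Real.sqrt (q i)
      else if (j : ℕ) = (i : ℕ) + 1 then Real.sqrt (e i) else 0)
    (W : Matrix (Fin N) (Fin N) ℝ) (hW : W = (B * Bᵀ)⁻¹)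
    (h : ℕ → ℕ → ℝ)
    (hh1a : h 1 0 = 1 / q 0)
    (hh1b : ∀ i, 0 < i → i < N → h 1 i = e (i - 1) / q i * h 1 (i - 1) + 1 / q i)
    (hhp0 : ∀ p, 2 ≤ p → h p 0 = 0)
    (hhp : ∀ p, 2 ≤ p → ∀ i, 0 < i → i < N →
      h p i = e (i - 1) / q i * (h p (i - 1) + p * h 1 (i - 1) * h (p - 1) (i - 1))
        + ∑ k ∈ Finset.Icc 1 (p - 2), (p.choose k : ℝ) * h k (i - 1) * h (p - k) i)
    (gt : ℕ → ℕ → ℝ)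
    (hgt0 : ∀ r, 1 ≤ r → gt r 0 = 0)
    (hgt1 : ∀ i (h1 : 0 < i) (h2 : i < N),
      gt 1 i = e (i - 1) / q i * W ⟨i - 1, by omega⟩ ⟨i - 1, by omega⟩)
    (hgtr : ∀ r, 2 ≤ r → ∀ i, 0 < i → i < N →
      gt r i = e (i - 1) / q i * gt r (i - 1) + 1 / q (i - 1) * gt (r - 1) i
        + ∑ k ∈ Finset.Icc 1 (r - 1), gt k (i - 1) * gt (r - k) i) :
    ∀ i, i < N → ∀ M, 2 ≤ M → h M i = (Nat.factorial M : ℝ) * gt M i := by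
  obtain rfl : B = upperBidiagonal N (fun i ↦ √(q i)) (fun i ↦ √(e i)) := Matrix.ext hB
  exact stmt_7_general N q e _ _ (fun i hi ↦ (hq i hi).ne') (fun i hi ↦ Real.sq_sqrt (hq i hi).le)
    (fun i hi ↦ Real.sq_sqrt (he i hi).le) W hW h hh1a hh1b hhp0 hhp gt hgt0 hgt1 hgtr
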